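/- Let (G,I) be a 3-transposition group and B(G) = ⊕_{i∈I} ℂ x^i with product x^i·x^i = 2x^i, x^i·x^j = (1/4)(x^i + x^j − x^{i∘j}) when i ∼ j (where i∘j = iji), and x^i·x^j = 0 otherwise; and bilinear form (x^i|x^i) = 1/4, (x^i|x^j) = 1/32 if i ∼ j, and 0 otherwise. Then the bilinear form is invariant: (a·b | c) = (a | b·c) for all a,b,c ∈ B(G). -/

import Mathlib

theorem aux_key {ι : Type*} [Fintype ι] [DecidableEq ι] (R : ι → ι → Prop)
    [∀ i j, Decidable (R i j)] (circ : ι → ι → ι)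
    (hs : ∀ i j, R i j → R j i) (hirr : ∀ i, ¬ R i i)
    (hc : ∀ i j, R i j → circ i j = circ j i)
    (hne : ∀ i j, R i j → R i (circ i j))
    (hm : ∀ i j k, R (circ j i) k ↔ R i (circ j k))
    (he : ∀ i j k, circ j i = k ↔ i = circ j k)
    (ht : ∀ j k, ¬ R j k → circ j k = k)
    (S : ι → ι → ι → ℂ) (hS : S = fun i j => (if i = j then ((2 : ℂ) • (Pi.single i (1 : ℂ) : ι → ℂ))
       else if R i j then
         ((4 : ℂ)⁻¹ • ((Pi.single i (1 : ℂ) : ι → ℂ) + (Pi.single j (1 : ℂ) : ι → ℂ) - (Pi.single (circ i j) (1 : ℂ) : ι → ℂ)))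
       else (0 : ι → ℂ)))
    (β : ι → ι → ℂ) (hβ : β = fun i j => (if i = j then (4 : ℂ)⁻¹
       else if R i j then (32 : ℂ)⁻¹ else 0)) (i j l : ι) :
    ∑ k, S i j k * β k l = ∑ k, S j l k * β i k := by
  have bs : ∀ i j, β i j = β j i := by
    intro i j
    have : R i j ↔ R j i := ⟨hs _ _, hs _ _⟩
    simp only [hβ, this, eq_comm]
  have bd : ∀ i, β i i = 4⁻¹ := by intro i; simp [hβ]
  have br : ∀ i j, R i j → β i j = 32⁻¹ := by
    intro i j h
    have : i ≠ j := by rintro rfl; exact hirr _ h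
    simp [hβ, this, h]
  have bn : ∀ i j, i ≠ j → ¬ R i j → β i j = 0 := by
    intro i j h h'
    simp [hβ, h, h']
  have bc : ∀ i j k, β (circ j i) k = β i (circ j k) := by
    intro i j k; simp only [hβ, hm, he]
  have L : ∀ (f : ι → ℂ) i j, ∑ k, S i j k * f k =
      if i = j then 2 * f i else if R i j then 4⁻¹ * (f i + f j - f (circ i j)) else 0 := by
    intro f i j
    rw [hS]
    dsimp only
    split_ifs with h1 h2
    · simp [Pi.single_apply]
    · simp [Pi.single_apply, mul_assoc, ← Finset.mul_sum, sub_mul, add_mul,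
        Finset.sum_add_distrib, Finset.sum_sub_distrib]
    · simp
  rw [L (fun k => β k l), L]
  by_cases h1 : i = j
  · subst h1
    by_cases h2 : i = l
    · subst h2; simp
    · by_cases h3 : R i l
      · simp only [h2, h3, if_true, if_false, bd, br _ _ h3, br _ _ (hne _ _ h3)]; norm_num
      · simp [h2, h3, bn _ _ h2 h3]
  by_cases h2 : j = l
  · subst h2
    by_cases h3 : R i j
    · have := hne _ _ (hs _ _ h3)
      rw [hc _ _ h3, bs (circ j i) j]
      simp only [h1, h3, if_true, if_false, bd, br _ _ h3, br _ _ this]; norm_num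
    · simp [h1, h3, bn _ _ h1 h3]
  simp only [h1, h2, if_false]
  by_cases h3 : R i j <;> by_cases h4 : R j l
  · simp only [h3, h4, if_true, hc _ _ h3, bc, br _ _ h3, br _ _ h4]; ring
  · simp only [h3, h4, if_true, if_false, hc _ _ h3, bc, ht _ _ h4, bn _ _ h2 h4]; ring
  · have h3' : ¬ R j i := fun h => h3 (hs _ _ h)
    simp only [h3, h4, if_true, if_false, hc _ _ h4]
    rw [hc _ _ (hs _ _ h4), ← bc, ht _ _ h3', bn _ _ h1 h3]; ring
  · simp [h3, h4]

theorem aux_ord {G : Type*} [Group G] (I : Set G) [Fintype I]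
    (hinv : ∀ a ∈ I, a * a = 1 ∧ a ≠ 1)
    (hconj : ∀ g : G, ∀ a ∈ I, g * a * g⁻¹ ∈ I) (a b : G) (ha : a ∈ I) (hb : b ∈ I) :
    orderOf (a * b) ≠ 0 := by
  have haa : a⁻¹ = a := inv_eq_of_mul_eq_one_left (hinv a ha).1
  have hbb : b⁻¹ = b := inv_eq_of_mul_eq_one_left (hinv b hb).1
  have key : ∀ n : ℕ, 0 < n → (a * b) ^ n * a * ((a * b) ^ n)⁻¹ = a → orderOf (a * b) ≠ 0 := by
    intro n hn h
    have h2 : a * (a * b) ^ n * a⁻¹ = ((a * b) ^ n)⁻¹ := by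
      rw [← conj_pow, ← inv_pow, mul_inv_rev, haa, hbb]
      congr 1
      rw [← mul_assoc, (hinv a ha).1, one_mul]
    have h3 : (a * b) ^ n * a = a * (a * b) ^ n := mul_inv_eq_iff_eq_mul.mp h
    rw [← h3, mul_inv_cancel_right] at h2
    have h4 : (a * b) ^ (n + n) = 1 := by
      rw [pow_add]; nth_rw 1 [h2]; simp
    have := orderOf_dvd_of_pow_eq_one h4
    intro h0
    rw [h0] at this
    have := Nat.eq_zero_of_zero_dvd this
    omega
  obtain ⟨m, n, hmn, h⟩ := Finite.exists_ne_map_eq_of_infinite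
    (fun n : ℕ => (⟨(a * b) ^ n * a * ((a * b) ^ n)⁻¹, hconj _ _ ha⟩ : I))
  have main : ∀ m n : ℕ, m < n → (a * b) ^ m * a * ((a * b) ^ m)⁻¹ =
      (a * b) ^ n * a * ((a * b) ^ n)⁻¹ → orderOf (a * b) ≠ 0 := by
    intro m n hlt h
    obtain ⟨k, rfl⟩ := Nat.exists_eq_add_of_lt hlt
    refine key (k + 1) (by omega) ?_
    rw [add_assoc, pow_add (a * b) m (k + 1)] at h
    generalize (a * b) ^ m = x at h
    generalize (a * b) ^ (k + 1) = y at h ⊢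
    have : x * a * x⁻¹ = x * (y * a * y⁻¹) * x⁻¹ := by rw [h]; group
    exact (mul_left_cancel (mul_right_cancel this)).symm
  have h' := congrArg Subtype.val h
  dsimp only at h'
  rcases lt_or_gt_of_ne hmn with h1 | h1
  · exact main _ _ h1 h'
  · exact main _ _ h1 h'.symm

theorem aux_sum3 {ι : Type*} [Fintype ι] (F : ι → ι → ι → ℂ) :
    ∑ k, ∑ j, ∑ l, F k j l = ∑ j, ∑ l, ∑ k, F k j l := by
  rw [Finset.sum_comm]
  exact Finset.sum_congr rfl fun j _ => Finset.sum_comm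

theorem aux_sum4 {ι : Type*} [Fintype ι] (F : ι → ι → ι → ι → ℂ) :
    ∑ k, ∑ l, ∑ i, ∑ j, F k l i j = ∑ i, ∑ j, ∑ l, ∑ k, F k l i j := by
  rw [Finset.sum_comm, aux_sum3 (fun l k i => ∑ j, F k l i j), Finset.sum_comm]
  refine Finset.sum_congr rfl fun i _ => ?_
  rw [aux_sum3 (fun k l j => F k l i j), Finset.sum_comm]


/-- Let `(G, I)` be a 3-transposition group with `I` finite, and let `B(G) = ⊕_{i ∈ I} ℂ xⁱ`
be the Matsuo algebra, with product `xⁱ·xⁱ = 2xⁱ`, `xⁱ·xʲ = (1/4)(xⁱ + xʲ - x^{i∘j})` when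
`i ∼ j` (i.e. `orderOf (i*j) = 3`, where `i∘j = iji`), and `xⁱ·xʲ = 0` otherwise; with bilinear
form `(xⁱ|xⁱ) = 1/4`, `(xⁱ|xʲ) = 1/32` if `i ∼ j`, and `0` otherwise.  Then the bilinear form
is invariant: `(a·b | c) = (a | b·c)` for all `a, b, c ∈ B(G)`. -/
theorem stmt_3 {G : Type*} [Group G] [DecidableEq G] (I : Set G) [Fintype I]
    (hinv : ∀ a ∈ I, a * a = 1 ∧ a ≠ 1)
    (hgen : Subgroup.closure I = ⊤)
    (hconj : ∀ g : G, ∀ a ∈ I, g * a * g⁻¹ ∈ I)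
    (hord : ∀ a ∈ I, ∀ b ∈ I, orderOf (a * b) ≤ 3)
    (circ : I → I → I) (hcirc : ∀ i j : I, (circ i j : G) = (i : G) * j * i)
    (mul : (I → ℂ) → (I → ℂ) → (I → ℂ))
    (hmul : ∀ f g : I → ℂ, mul f g = ∑ i : I, ∑ j : I, (f i * g j) •
      (if i = j then ((2 : ℂ) • (Pi.single i (1 : ℂ) : I → ℂ))
       else if orderOf ((i : G) * (j : G)) = 3 then
         ((4 : ℂ)⁻¹ • ((Pi.single i (1 : ℂ) : I → ℂ) + (Pi.single j (1 : ℂ) : I → ℂ) - (Pi.single (circ i j) (1 : ℂ) : I → ℂ)))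
       else (0 : I → ℂ)))
    (form : (I → ℂ) → (I → ℂ) → ℂ)
    (hform : ∀ f g : I → ℂ, form f g = ∑ i : I, ∑ j : I, f i * g j *
      (if i = j then (4 : ℂ)⁻¹
       else if orderOf ((i : G) * (j : G)) = 3 then (32 : ℂ)⁻¹ else 0)) :
    ∀ a b c : I → ℂ, form (mul a b) c = form a (mul b c) := by

  have sq : ∀ i : I, (i : G) * i = 1 := fun i => (hinv i i.2).1
  have iv : ∀ i : I, (i : G)⁻¹ = i := fun i => inv_eq_of_mul_eq_one_left (sq i)
  have sc : ∀ (i : I) (x : G), (i : G) * (i * x) = x := fun i x => by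
    rw [← mul_assoc, sq, one_mul]
  have oc : ∀ (g x : G), orderOf (g * x * g⁻¹) = orderOf x := fun g x => by
    have := orderOf_injective (MulAut.conj g).toMonoidHom (MulAut.conj g).injective x
    simpa using this
  have cube : ∀ i j : I, orderOf ((i : G) * j) = 3 → (i : G) * j * i = j * i * j := by
    intro i j h
    have h3 := pow_orderOf_eq_one ((i : G) * j)
    rw [h] at h3
    have h4 : ((i : G) * j * i) * (j * i * j) = 1 := by rw [← h3]; simp [pow_succ, mul_assoc]
    have := eq_inv_of_mul_eq_one_left h4
    rw [this]; simp [iv, mul_assoc]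
  have key := aux_key (ι := I) (fun i j => orderOf ((i : G) * (j : G)) = 3) circ
    (by
      intro i j h
      rw [← orderOf_inv]; simpa [iv] using h)
    (by intro i; simp [sq])
    (by
      intro i j h
      apply Subtype.ext
      rw [hcirc, hcirc, cube i j h])
    (by
      intro i j h
      rw [hcirc, cube i j h, ← cube i j h, mul_assoc, sc, ← orderOf_inv]; simpa [iv] using h)
    (by
      intro i j k
      rw [hcirc, hcirc, ← oc j (j * i * j * k)]
      simp [iv, mul_assoc, sc])
    (by
      intro i j k
      rw [Subtype.ext_iff, Subtype.ext_iff, hcirc, hcirc]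
      constructor
      · intro h; rw [← h]; simp [mul_assoc, sc, sq]
      · intro h; rw [h]; simp [mul_assoc, sc, sq])
    (by
      intro j k h
      apply Subtype.ext
      rw [hcirc]
      have h0 := aux_ord I hinv hconj j k j.2 k.2
      have h3 := hord j j.2 k k.2
      have hd : orderOf ((j : G) * k) ∣ 2 := by
        have : orderOf ((j : G) * k) = 1 ∨ orderOf ((j : G) * k) = 2 := by
          omega
        rcases this with h | h <;> simp [h]
      have := orderOf_dvd_iff_pow_eq_one.mp hd
      rw [pow_two, ← mul_assoc] at this
      rw [eq_inv_of_mul_eq_one_left this, iv])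
    _ rfl _ rfl
  intro a b c
  rw [hform, hform, hmul, hmul]
  simp only [Finset.sum_apply, Pi.smul_apply, smul_eq_mul]
  generalize hS : (fun i j : I => (if i = j then ((2 : ℂ) • (Pi.single i (1 : ℂ) : I → ℂ))
       else if orderOf ((i : G) * (j : G)) = 3 then
         ((4 : ℂ)⁻¹ • ((Pi.single i (1 : ℂ) : I → ℂ) + (Pi.single j (1 : ℂ) : I → ℂ) - (Pi.single (circ i j) (1 : ℂ) : I → ℂ)))
       else (0 : I → ℂ))) = S at key
  generalize hβ : (fun i j : I => (if i = j then (4 : ℂ)⁻¹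
       else if orderOf ((i : G) * (j : G)) = 3 then (32 : ℂ)⁻¹ else 0)) = β at key
  have hS' := fun i j => congrFun (congrFun hS i) j
  have hβ' := fun i j => congrFun (congrFun hβ i) j
  simp only [hS', hβ'] at key ⊢
  trans ∑ i, ∑ j, ∑ l, a i * b j * c l * ∑ k, S i j k * β k l
  · simp only [Finset.sum_mul, Finset.mul_sum]
    rw [aux_sum4]
    refine Finset.sum_congr rfl fun i _ => Finset.sum_congr rfl fun j _ =>
      Finset.sum_congr rfl fun l _ => Finset.sum_congr rfl fun k _ => ?_
    ring
  · simp only [key]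
    simp only [Finset.sum_mul, Finset.mul_sum]
    refine Finset.sum_congr rfl fun i _ => ?_
    rw [← aux_sum3]
    refine Finset.sum_congr rfl fun j _ =>
      Finset.sum_congr rfl fun l _ => Finset.sum_congr rfl fun k _ => ?_
    ring
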